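/- arXiv:0910.4715 — 2 statements merged into one kernel-verified Lean document; each statement's English description precedes it below -/
import Mathlib

section
/- Let m, n be natural numbers with 0 ≤ m ≤ n, and let x > 1 be real. Then d^m/dx^m [P_n(x)·log(x+1)] = P_n^{(m)}(x)·log(x+1) + (ψ(n+1) − ψ(n−m+1))·P_n^{(m)}(x) − 2^{−m} Σ_{k=0}^{n−m} ((k+n+m)!·ψ(k+n+m+1))/(k!·(k+m)!·(n−m−k)!) · ((x−1)/2)^k + ((n+m)!/(n−m)!)·(x+1)^{−m} Σ_{k=0}^{n} ((k+n)!·ψ(k+n+1))/(k!·(k+m)!·(n−k)!) · ((x−1)/2)^k. -/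
open Finset Real

/-- The Legendre polynomial `P_n`, via its explicit expansion
`P_n(x) = ∑_{k=0}^{n} ((n+k)!/((k!)² (n−k)!)) ((x−1)/2)^k`. -/
noncomputable def legendreP (n : ℕ) (x : ℝ) : ℝ :=
  ∑ k ∈ Finset.range (n + 1),
    (((n + k).factorial : ℝ) / (((k.factorial : ℝ)) ^ 2 * ((n - k).factorial : ℝ))) *
      ((x - 1) / 2) ^ k

/-- The harmonic number `H_i = ∑_{r=1}^{i} 1/r`. -/
noncomputable def harm (i : ℕ) : ℝ := ∑ r ∈ Finset.range i, (1 : ℝ) / (r + 1)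

/-- The digamma function at a positive integer `j`: `ψ(j) = H_{j−1} − γ`. -/
noncomputable def psi (j : ℕ) : ℝ := harm (j - 1) - Real.eulerMascheroniConstant

/-!
Put `t = (x - 1) / 2`. For a parameter `ε` the classical derivative formula for
`(1 + t) ^ ε * ₂F₁(-n, n + 1 + ε; 1; -t)` reads, with `ε = 0` being the case of `P_n`,
`d^m/dx^m [(x + 1)^ε ∑ₖ Γ(k + n + 1 + ε) tᵏ / (k!² (n - k)!)] =`
`(n + m)! / n! * Γ(n + 1 + ε) / Γ(n - m + 1 + ε) * (x + 1)^(ε - m) *`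
`∑ₖ Γ(k + n + 1 + ε) tᵏ / (k! (k + m)! (n - k)!)`.
The theorem is the `ε`-derivative of this formula at `ε = 0`: the sums acquire factors `ψ`, the
power of `x + 1` yields the logarithm, and the constant yields `ψ(n + 1) - ψ(n - m + 1)`; the
`ψ`-weighted sum arising on the left is differentiated term by term. The value and the
`ε`-derivative at `0` are carried as a pair of numerator sequences `b` and `a` with
`b (k + 1) = (k + n + 1) b k` and `a (k + 1) = (k + n + 1) a k + b k`.
-/

section IteratedDeriv

variable {𝕜 E : Type*} [NontriviallyNormedField 𝕜] [NormedAddCommGroup E] [NormedSpace 𝕜 E]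

lemma iteratedDeriv_eq_of_forall_hasDerivAt {F : ℕ → 𝕜 → E} {s : Set 𝕜} {n : ℕ} (hs : IsOpen s)
    (hF : ∀ m < n, ∀ x ∈ s, HasDerivAt (F m) (F (m + 1) x) x) {m : ℕ} (hm : m ≤ n) {x : 𝕜}
    (hx : x ∈ s) : iteratedDeriv m (F 0) x = F m x := by
  induction m generalizing x with
  | zero => rw [iteratedDeriv_zero]
  | succ m ih =>
    have heq : iteratedDeriv m (F 0) =ᶠ[nhds x] F m :=
      Filter.eventually_of_mem (hs.mem_nhds hx) fun y hy => ih (by omega) hy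
    rw [iteratedDeriv_succ, heq.deriv_eq, (hF m (by omega) x hx).deriv]

end IteratedDeriv

lemma hasDerivAt_sum_half_sub_one_pow (c : ℕ → ℝ) (n : ℕ) (x : ℝ) :
    HasDerivAt (fun y => ∑ k ∈ range (n + 1), c k * ((y - 1) / 2) ^ k)
      (∑ k ∈ range n, (k + 1) * c (k + 1) / 2 * ((x - 1) / 2) ^ k) x := by
  have hbase : HasDerivAt (fun y : ℝ => (y - 1) / 2) (1 / 2) x :=
    ((hasDerivAt_id x).sub_const 1).div_const 2
  refine (HasDerivAt.fun_sum fun k _ => (hbase.pow k).const_mul (c k)).congr_deriv ?_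
  rw [sum_range_succ']
  simp only [Nat.cast_zero, zero_mul, mul_zero, add_zero, Nat.add_sub_cancel]
  refine sum_congr rfl fun k _ => ?_
  push_cast
  ring

lemma add_one_mul_deriv_sum_half_sub_one_pow (c : ℕ → ℝ) (n : ℕ) (x : ℝ) :
    (x + 1) * deriv (fun y => ∑ k ∈ range (n + 1), c k * ((y - 1) / 2) ^ k) x =
      ∑ k ∈ range (n + 1), k * c k * ((x - 1) / 2) ^ k +
        ∑ k ∈ range n, (k + 1) * c (k + 1) * ((x - 1) / 2) ^ k := by
  rw [(hasDerivAt_sum_half_sub_one_pow c n x).deriv, sum_range_succ' _ n, mul_sum]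
  simp only [Nat.cast_zero, zero_mul, add_zero, ← sum_add_distrib]
  refine sum_congr rfl fun k _ => ?_
  push_cast
  ring

/-- A polynomial of Jacobi type in `(x - 1) / 2` with free numerators `a`: for
`a k = Γ(k + N + m + β + 1)` it is a constant multiple of the Jacobi polynomial `P_N^{(m, β)}`.
Leaving `a` arbitrary lets the same sum carry digamma weights. -/
noncomputable def jacobiTypeSum (N m : ℕ) (a : ℕ → ℝ) (x : ℝ) : ℝ :=
  ∑ k ∈ range (N + 1),
    a k / ((k.factorial : ℝ) * ((k + m).factorial : ℝ) * ((N - k).factorial : ℝ)) *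
      ((x - 1) / 2) ^ k

namespace jacobiTypeSum

protected lemma differentiable (N m : ℕ) (a : ℕ → ℝ) :
    Differentiable ℝ (jacobiTypeSum N m a) := by
  unfold jacobiTypeSum
  fun_prop

protected lemma hasDerivAt_succ (N m : ℕ) (a : ℕ → ℝ) (x : ℝ) :
    HasDerivAt (jacobiTypeSum (N + 1) m a)
      (jacobiTypeSum N (m + 1) (fun k => a (k + 1)) x / 2) x := by
  refine (hasDerivAt_sum_half_sub_one_pow _ (N + 1) x).congr_deriv ?_
  rw [jacobiTypeSum, sum_div]
  refine sum_congr rfl fun k _ => ?_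
  rw [Nat.add_sub_add_right, Nat.factorial_succ k, add_right_comm k 1 m, add_assoc k m 1]
  push_cast
  field_simp

lemma hasDerivAt_two_zpow_neg_mul {n m : ℕ} (hm : m < n) (a : ℕ → ℝ) (x : ℝ) :
    HasDerivAt (fun y => (2 : ℝ) ^ (-(m : ℤ)) * jacobiTypeSum (n - m) m (fun k => a (k + m)) y)
      ((2 : ℝ) ^ (-((m + 1 : ℕ) : ℤ)) *
        jacobiTypeSum (n - (m + 1)) (m + 1) (fun k => a (k + (m + 1))) x) x := by
  obtain ⟨d, rfl⟩ := Nat.exists_eq_add_of_lt hm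
  rw [show m + d + 1 - m = d + 1 by omega, show m + d + 1 - (m + 1) = d by omega]
  refine ((jacobiTypeSum.hasDerivAt_succ d m _ x).const_mul _).congr_deriv ?_
  rw [Nat.cast_succ, neg_add, zpow_add₀ two_ne_zero, zpow_neg_one]
  simp only [add_right_comm _ 1 m, add_assoc]
  ring

/-- The first-order form of Euler's transformation; `b` measures how far `a` is from the
numerators `Γ(k + c)` of a genuine hypergeometric polynomial. -/
lemma add_one_mul_deriv (n m : ℕ) {a b : ℕ → ℝ} {c : ℝ}
    (hab : ∀ k, a (k + 1) = (k + c) * a k + b k) (x : ℝ) :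
    (x + 1) * deriv (jacobiTypeSum n m a) x =
      (n + m + 1 - c) * jacobiTypeSum n m a x +
        (n + m + 1) * (c - m - 1) * jacobiTypeSum n (m + 1) a x +
        ((n + m + 1) * jacobiTypeSum n (m + 1) b x - jacobiTypeSum n m b x) := by
  have hshift : ∑ k ∈ range n, (k + 1) * (a (k + 1) / (((k + 1).factorial : ℝ) *
        ((k + 1 + m).factorial : ℝ) * ((n - (k + 1)).factorial : ℝ))) * ((x - 1) / 2) ^ k =
      ∑ k ∈ range (n + 1), (n - k) * (((k + c) * a k + b k) / ((k.factorial : ℝ) *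
        ((k + (m + 1)).factorial : ℝ) * ((n - k).factorial : ℝ))) * ((x - 1) / 2) ^ k := by
    rw [sum_range_succ, sub_self, zero_mul, zero_mul, add_zero]
    refine sum_congr rfl fun k hk => ?_
    obtain ⟨d, rfl⟩ := Nat.exists_eq_add_of_lt (mem_range.mp hk)
    rw [← hab, show k + d + 1 - (k + 1) = d by omega, show k + d + 1 - k = d + 1 by omega,
      add_right_comm k 1 m, ← add_assoc k m 1, Nat.factorial_succ k, Nat.factorial_succ d]
    push_cast
    field_simp
    ring
  refine (add_one_mul_deriv_sum_half_sub_one_pow _ n x).trans ?_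
  rw [hshift]
  simp only [jacobiTypeSum, mul_sum, ← sum_add_distrib, ← sum_sub_distrib]
  refine sum_congr rfl fun k _ => ?_
  rw [← add_assoc k m 1, Nat.factorial_succ (k + m)]
  push_cast
  field_simp
  ring

lemma add_one_mul_deriv_of_homogeneous (n m : ℕ) {b : ℕ → ℝ} {c : ℝ}
    (hb : ∀ k, b (k + 1) = (k + c) * b k) (x : ℝ) :
    (x + 1) * deriv (jacobiTypeSum n m b) x =
      (n + m + 1 - c) * jacobiTypeSum n m b x +
        (n + m + 1) * (c - m - 1) * jacobiTypeSum n (m + 1) b x := by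
  rw [add_one_mul_deriv n m (b := 0) (by simpa using hb)]
  simp [jacobiTypeSum]

end jacobiTypeSum

/-- The prefactor `(n + m)! / (n - m)! * (x + 1) ^ (-m)` produced by Euler's transformation of the
`m`-th derivative of `P_n`. -/
noncomputable def eulerFactor (n m : ℕ) (x : ℝ) : ℝ :=
  ((n + m).factorial : ℝ) / ((n - m).factorial : ℝ) * (x + 1) ^ (-(m : ℤ))

namespace eulerFactor

@[simp]
protected lemma zero (n : ℕ) (x : ℝ) : eulerFactor n 0 x = 1 := by
  simp [eulerFactor, Nat.factorial_ne_zero]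

variable {n m : ℕ} {x : ℝ}

protected lemma succ (hm : m < n) (hx : x + 1 ≠ 0) :
    eulerFactor n (m + 1) x = (n + m + 1) * (n - m) / (x + 1) * eulerFactor n m x := by
  obtain ⟨d, rfl⟩ := Nat.exists_eq_add_of_lt hm
  rw [eulerFactor, eulerFactor, show m + d + 1 - m = d + 1 by omega,
    show m + d + 1 - (m + 1) = d by omega, ← add_assoc (m + d + 1) m 1,
    Nat.factorial_succ (m + d + 1 + m), Nat.factorial_succ d, Nat.cast_succ m, neg_add,
    zpow_add₀ hx, zpow_neg_one]
  push_cast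
  field_simp
  ring

protected lemma hasDerivAt (n m : ℕ) (hx : x + 1 ≠ 0) :
    HasDerivAt (eulerFactor n m) (-m / (x + 1) * eulerFactor n m x) x := by
  have hpow : HasDerivAt (fun y : ℝ => (y + 1) ^ (-(m : ℤ))) _ x :=
    (hasDerivAt_zpow (-(m : ℤ)) (x + 1) (Or.inl hx)).comp_add_const x 1
  refine (hpow.const_mul _).congr_deriv ?_
  rw [eulerFactor, zpow_sub_one₀ hx]
  push_cast
  field_simp

lemma hasDerivAt_mul {f : ℝ → ℝ} {f' g : ℝ} (hm : m < n) (hx : x + 1 ≠ 0)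
    (hf : HasDerivAt f f' x) (hg : (x + 1) * f' = m * f x + (n + m + 1) * (n - m) * g) :
    HasDerivAt (fun y => eulerFactor n m y * f y) (eulerFactor n (m + 1) x * g) x := by
  refine ((eulerFactor.hasDerivAt n m hx).mul hf).congr_deriv ?_
  rw [eulerFactor.succ hm hx]
  field_simp
  linear_combination eulerFactor n m x * hg

end eulerFactor

section DerivativeChains

variable {n m : ℕ} {a b : ℕ → ℝ} {x : ℝ}

lemma hasDerivAt_eulerFactor_mul_jacobiTypeSum
    (hb : ∀ k, b (k + 1) = (k + (n + 1 : ℝ)) * b k) (hm : m < n) (hx : x + 1 ≠ 0) :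
    HasDerivAt (fun y => eulerFactor n m y * jacobiTypeSum n m b y)
      (eulerFactor n (m + 1) x * jacobiTypeSum n (m + 1) b x) x := by
  refine eulerFactor.hasDerivAt_mul hm hx (jacobiTypeSum.differentiable n m b x).hasDerivAt ?_
  linear_combination jacobiTypeSum.add_one_mul_deriv_of_homogeneous n m hb x

lemma hasDerivAt_eulerFactor_mul_log_mul_jacobiTypeSum_add
    (hb : ∀ k, b (k + 1) = (k + (n + 1 : ℝ)) * b k)
    (hab : ∀ k, a (k + 1) = (k + (n + 1 : ℝ)) * a k + b k) (e : ℝ) (hm : m < n)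
    (hx : x + 1 ≠ 0) :
    HasDerivAt
      (fun y => eulerFactor n m y *
        ((log (y + 1) + e) * jacobiTypeSum n m b y + jacobiTypeSum n m a y))
      (eulerFactor n (m + 1) x *
        ((log (x + 1) + (e + 1 / (n - m))) * jacobiTypeSum n (m + 1) b x +
          jacobiTypeSum n (m + 1) a x)) x := by
  have hlog : HasDerivAt (fun y => log (y + 1) + e) (1 / (x + 1)) x :=
    (((hasDerivAt_id x).add_const 1).log hx).add_const e
  have hB := (jacobiTypeSum.differentiable n m b x).hasDerivAt
  have hA := (jacobiTypeSum.differentiable n m a x).hasDerivAt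
  refine eulerFactor.hasDerivAt_mul hm hx ((hlog.fun_mul hB).fun_add hA) ?_
  have hnm : (n - m : ℝ) ≠ 0 := sub_ne_zero.mpr (mod_cast hm.ne')
  have hB' := jacobiTypeSum.add_one_mul_deriv_of_homogeneous n m hb x
  have hA' := jacobiTypeSum.add_one_mul_deriv n m hab x
  linear_combination (log (x + 1) + e) * hB' + hA' +
    jacobiTypeSum n m b x * mul_one_div_cancel hx -
    (n + m + 1) * jacobiTypeSum n (m + 1) b x * mul_one_div_cancel hnm

end DerivativeChains

lemma legendreP_eq_jacobiTypeSum (n : ℕ) :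
    legendreP n = jacobiTypeSum n 0 (fun k => ((k + n).factorial : ℝ)) := by
  funext x
  simp only [legendreP, jacobiTypeSum, add_zero, add_comm n, sq]

lemma harm_succ (i : ℕ) : harm (i + 1) = harm i + 1 / (i + 1) :=
  sum_range_succ _ i

lemma psi_add_two (j : ℕ) : psi (j + 2) = psi (j + 1) + 1 / (j + 1) := by
  rw [psi, psi, Nat.add_sub_cancel, Nat.add_succ_sub_one, harm_succ]
  ring

lemma psi_sub_add_one {m n : ℕ} (hm : m < n) :
    psi (n - m + 1) = psi (n - (m + 1) + 1) + 1 / (n - m) := by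
  obtain ⟨d, rfl⟩ := Nat.exists_eq_add_of_lt hm
  rw [show m + d + 1 - m + 1 = d + 2 by omega, show m + d + 1 - (m + 1) = d by omega, psi_add_two]
  push_cast
  ring

lemma cast_factorial_succ_add (n k : ℕ) :
    ((k + 1 + n).factorial : ℝ) = (k + (n + 1 : ℝ)) * (k + n).factorial := by
  rw [add_right_comm, Nat.factorial_succ]
  push_cast
  ring

lemma cast_factorial_succ_add_mul_psi (n k : ℕ) :
    ((k + 1 + n).factorial : ℝ) * psi (k + 1 + n + 1) =
      (k + (n + 1 : ℝ)) * ((k + n).factorial * psi (k + n + 1)) + (k + n).factorial := by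
  rw [cast_factorial_succ_add, add_right_comm k 1 n, psi_add_two]
  push_cast
  field_simp
  ring

theorem iteratedDeriv_legendreP {m n : ℕ} (hmn : m ≤ n) {x : ℝ} (hx : x + 1 ≠ 0) :
    iteratedDeriv m (legendreP n) x =
      eulerFactor n m x * jacobiTypeSum n m (fun k => ((k + n).factorial : ℝ)) x := by
  have hopen : IsOpen {y : ℝ | y + 1 ≠ 0} := isOpen_ne_fun (by fun_prop) continuous_const
  have hchain := iteratedDeriv_eq_of_forall_hasDerivAt
    (F := fun m y => eulerFactor n m y * jacobiTypeSum n m (fun k => ((k + n).factorial : ℝ)) y)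
    hopen
    (fun m hm y hy => hasDerivAt_eulerFactor_mul_jacobiTypeSum (cast_factorial_succ_add n) hm hy)
    hmn hx
  simpa only [eulerFactor.zero, one_mul, ← legendreP_eq_jacobiTypeSum] using hchain

theorem iteratedDeriv_legendreP_mul_log {m n : ℕ} (hmn : m ≤ n) {x : ℝ} (hx : x + 1 ≠ 0) :
    iteratedDeriv m (fun y => legendreP n y * log (y + 1)) x =
      eulerFactor n m x *
        ((log (x + 1) + (psi (n + 1) - psi (n - m + 1))) *
            jacobiTypeSum n m (fun k => ((k + n).factorial : ℝ)) x +
          jacobiTypeSum n m (fun k => (k + n).factorial * psi (k + n + 1)) x) -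
      (2 : ℝ) ^ (-(m : ℤ)) *
        jacobiTypeSum (n - m) m (fun k => (k + m + n).factorial * psi (k + m + n + 1)) x := by
  set b : ℕ → ℝ := fun k => (k + n).factorial
  set a : ℕ → ℝ := fun k => (k + n).factorial * psi (k + n + 1)
  have hopen : IsOpen {y : ℝ | y + 1 ≠ 0} := isOpen_ne_fun (by fun_prop) continuous_const
  have hchain := iteratedDeriv_eq_of_forall_hasDerivAt
    (F := fun m y => eulerFactor n m y *
        ((log (y + 1) + (psi (n + 1) - psi (n - m + 1))) * jacobiTypeSum n m b y +
          jacobiTypeSum n m a y) -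
      (2 : ℝ) ^ (-(m : ℤ)) * jacobiTypeSum (n - m) m (fun k => a (k + m)) y)
    hopen (fun m hm y hy => ?_) hmn hx
  · convert hchain using 2
    funext y
    simp only [legendreP_eq_jacobiTypeSum, eulerFactor.zero, Nat.sub_zero, sub_self, add_zero,
      Nat.cast_zero, neg_zero, zpow_zero, one_mul, b]
    ring
  · have hlog := hasDerivAt_eulerFactor_mul_log_mul_jacobiTypeSum_add (a := a) (b := b)
      (cast_factorial_succ_add n) (cast_factorial_succ_add_mul_psi n)
      (psi (n + 1) - psi (n - m + 1)) hm hy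
    have hpsi : psi (n + 1) - psi (n - m + 1) + 1 / (n - m) =
        psi (n + 1) - psi (n - (m + 1) + 1) := by
      rw [psi_sub_add_one hm]
      ring
    rw [hpsi] at hlog
    exact hlog.sub (jacobiTypeSum.hasDerivAt_two_zpow_neg_mul hm a y)

-- As `Real.log y = log |y|`, for `x < -1` the function differentiated is `P_n(x) log |x + 1|`.
theorem stmt_0_general (m n : ℕ) (hmn : m ≤ n) (x : ℝ) (hx : x ≠ -1) :
    iteratedDeriv m (fun y => legendreP n y * Real.log (y + 1)) x =
      iteratedDeriv m (legendreP n) x * Real.log (x + 1)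
      + (psi (n + 1) - psi (n - m + 1)) * iteratedDeriv m (legendreP n) x
      - (2 : ℝ) ^ (-(m : ℤ)) *
          ∑ k ∈ Finset.range (n - m + 1),
            (((k + n + m).factorial : ℝ) * psi (k + n + m + 1)) /
                ((k.factorial : ℝ) * ((k + m).factorial : ℝ) * ((n - m - k).factorial : ℝ)) *
              ((x - 1) / 2) ^ k
      + ((n + m).factorial : ℝ) / ((n - m).factorial : ℝ) * (x + 1) ^ (-(m : ℤ)) *
          ∑ k ∈ Finset.range (n + 1),
            (((k + n).factorial : ℝ) * psi (k + n + 1)) /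
                ((k.factorial : ℝ) * ((k + m).factorial : ℝ) * ((n - k).factorial : ℝ)) *
              ((x - 1) / 2) ^ k := by
  have hx' : x + 1 ≠ 0 := fun h => hx (eq_neg_of_add_eq_zero_left h)
  rw [iteratedDeriv_legendreP_mul_log hmn hx', iteratedDeriv_legendreP hmn hx']
  simp only [jacobiTypeSum, eulerFactor, add_right_comm _ m n]
  ring

theorem stmt_0 (m n : ℕ) (hmn : m ≤ n) (x : ℝ) (hx : 1 < x) :
    iteratedDeriv m (fun y => legendreP n y * Real.log (y + 1)) x =
      iteratedDeriv m (legendreP n) x * Real.log (x + 1)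
      + (psi (n + 1) - psi (n - m + 1)) * iteratedDeriv m (legendreP n) x
      - (2 : ℝ) ^ (-(m : ℤ)) *
          ∑ k ∈ Finset.range (n - m + 1),
            (((k + n + m).factorial : ℝ) * psi (k + n + m + 1)) /
                ((k.factorial : ℝ) * ((k + m).factorial : ℝ) * ((n - m - k).factorial : ℝ)) *
              ((x - 1) / 2) ^ k
      + ((n + m).factorial : ℝ) / ((n - m).factorial : ℝ) * (x + 1) ^ (-(m : ℤ)) *
          ∑ k ∈ Finset.range (n + 1),
            (((k + n).factorial : ℝ) * psi (k + n + 1)) /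
                ((k.factorial : ℝ) * ((k + m).factorial : ℝ) * ((n - k).factorial : ℝ)) *
              ((x - 1) / 2) ^ k := by
  exact stmt_0_general m n hmn x (by linarith)
end

section
/- Let m, n be natural numbers with 0 ≤ m ≤ n, and let x > 1 be real. Then d^m/dx^m [P_n(x)·log(x+1)] = P_n^{(m)}(x)·log(x+1) + (ψ(n+m+1) − ψ(n−m+1))·P_n^{(m)}(x) − 2^{−m} Σ_{k=0}^{n−m} ((k+n+m)!/(k!·(k+m)!·(n−m−k)!))·(2ψ(k+n+m+1) − ψ(k+m+1)) · ((x−1)/2)^k + ((n+m)!/(n−m)!)·(x+1)^{−m} Σ_{k=0}^{n} ((k+n)!/(k!·(k+m)!·(n−k)!))·(2ψ(k+n+1) − ψ(k+m+1)) · ((x−1)/2)^k. -/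
open Finset Real

/-!
Put `Φ_m(a)(x) = (n+m)!/(n-m)! (x+1)^(-m) ∑_{k ≤ n} a_k ((x-1)/2)^k`. With the coefficients `g_m` of
the Jacobi polynomial `P_n^{(m,-m)}` one has `P_n^{(m)} = Φ_m(g_m)`. Weighting `g_m` by digamma
values gives coefficients `b_m` with
`Φ_m(b_m)' = Φ_{m+1}(b_{m+1}) + (1/(n+m+1) + 1/(n-m)) P_n^{(m+1)} - P_n^{(m)}/(x+1)`.
In an induction on `m`, the middle term is the increment of `ψ(n+m+1) - ψ(n-m+1)`, and the last one
cancels the term `P_n^{(m)}/(x+1)` coming from the derivative of the logarithm.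
-/

/-- The finite expansion `∑_{k < N} a_k ((x-1)/2)^k` about `1`, in the variable used by the explicit
formula for `P_n`. -/
noncomputable def shiftedSum (a : ℕ → ℝ) (N : ℕ) (x : ℝ) : ℝ :=
  ∑ k ∈ range N, a k * ((x - 1) / 2) ^ k

lemma hasDerivAt_shiftedSum (a : ℕ → ℝ) (N : ℕ) (x : ℝ) :
    HasDerivAt (shiftedSum a (N + 1))
      (1 / 2 * shiftedSum (fun k => (k + 1) * a (k + 1)) N x) x := by
  have hterm (k : ℕ) : HasDerivAt (fun y : ℝ => a k * ((y - 1) / 2) ^ k)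
      (a k * (k * ((x - 1) / 2) ^ (k - 1) * (1 / 2))) x :=
    ((((hasDerivAt_id x).sub_const 1).div_const 2).pow k).const_mul (a k)
  refine (HasDerivAt.fun_sum fun k (_ : k ∈ range (N + 1)) => hterm k).congr_deriv ?_
  rw [sum_range_succ', shiftedSum, mul_sum]
  simp only [Nat.cast_zero, zero_mul, mul_zero, add_zero, Nat.add_sub_cancel]
  refine sum_congr rfl fun k _ => ?_
  push_cast
  ring

lemma half_mul_shiftedSum_succ_sub (a : ℕ → ℝ) (N : ℕ) (s x : ℝ) :
    (x + 1) / 2 * shiftedSum (fun k => (k + 1) * a (k + 1)) N x - s * shiftedSum a (N + 1) x =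
      shiftedSum (fun k => (k + 1) * a (k + 1) + (k - s) * a k) N x
        + (N - s) * a N * ((x - 1) / 2) ^ N := by
  have hshift : (x - 1) / 2 * shiftedSum (fun k => (k + 1) * a (k + 1)) N x =
      shiftedSum (fun k => k * a k) (N + 1) x := by
    rw [shiftedSum, shiftedSum, sum_range_succ', mul_sum]
    simp only [Nat.cast_zero, zero_mul, add_zero]
    refine sum_congr rfl fun k _ => ?_
    push_cast
    ring
  rw [show (x + 1) / 2 = 1 + (x - 1) / 2 by ring, add_mul, hshift]
  simp only [shiftedSum, sum_range_succ, add_mul, sub_mul, sum_add_distrib, sum_sub_distrib,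
    mul_add, mul_sum, mul_assoc, one_mul]
  ring

lemma zpow_neg_eq_mul_zpow_neg_add_one {𝕜 : Type*} [DivisionRing 𝕜] {y : 𝕜} (hy : y ≠ 0) (s : ℤ) :
    y ^ (-s) = y * y ^ (-(s + 1)) := by
  rw [← zpow_one_add₀ hy, neg_add_rev, add_neg_cancel_left]

lemma hasDerivAt_zpow_mul_shiftedSum {a c : ℕ → ℝ} {N : ℕ} {x : ℝ} (s : ℤ) (hx : x ≠ -1)
    (hlt : ∀ k < N, (k + 1) * a (k + 1) + (k - s) * a k = c k) (hlast : (N - s) * a N = c N) :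
    HasDerivAt (fun y => (y + 1) ^ (-s) * shiftedSum a (N + 1) y)
      ((x + 1) ^ (-(s + 1)) * shiftedSum c (N + 1) x) x := by
  have hx' : x + 1 ≠ 0 := eq_neg_iff_add_eq_zero.not.mp hx
  have hpow : HasDerivAt (fun y : ℝ => (y + 1) ^ (-s)) (-s * (x + 1) ^ (-(s + 1))) x := by
    rw [neg_add', ← Int.cast_neg]
    exact (hasDerivAt_zpow (-s) (x + 1) (Or.inl hx')).comp_add_const x 1
  have hsum : shiftedSum c (N + 1) x =
      shiftedSum (fun k => (k + 1) * a (k + 1) + (k - s) * a k) N x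
        + (N - s) * a N * ((x - 1) / 2) ^ N := by
    rw [shiftedSum, sum_range_succ, hlast, shiftedSum]
    exact congrArg (· + _) (sum_congr rfl fun k hk => by rw [hlt k (mem_range.mp hk)])
  refine (hpow.fun_mul (hasDerivAt_shiftedSum a N x)).congr_deriv ?_
  rw [hsum, ← half_mul_shiftedSum_succ_sub, zpow_neg_eq_mul_zpow_neg_add_one hx' s]
  ring

/-- The map `Φ_m` sending coefficients `a` to `(n+m)!/(n-m)! (x+1)^(-m) ∑_{k ≤ n} a_k ((x-1)/2)^k`.
The prefactor is meaningful for `m ≤ n` only, `n - m` being truncated. -/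
noncomputable def jacobiForm (n m : ℕ) (a : ℕ → ℝ) (x : ℝ) : ℝ :=
  (n + m).factorial / (n - m).factorial * (x + 1) ^ (-(m : ℤ)) * shiftedSum a (n + 1) x

lemma factorial_add_div_factorial_sub_succ {n m : ℕ} (hmn : m < n) :
    ((n + (m + 1)).factorial / (n - (m + 1)).factorial : ℝ) =
      (n + m).factorial / (n - m).factorial * ((n + m + 1) * (n - m)) := by
  obtain ⟨d, rfl⟩ := Nat.exists_eq_add_of_lt hmn
  rw [show m + d + 1 - m = d + 1 by omega, show m + d + 1 - (m + 1) = d by omega, ← add_assoc,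
    Nat.factorial_succ, Nat.factorial_succ d]
  push_cast
  field_simp
  ring

lemma hasDerivAt_jacobiForm {n m : ℕ} {a c : ℕ → ℝ} {x : ℝ} (hmn : m < n) (hx : x ≠ -1)
    (hlt : ∀ k < n, (k + 1) * a (k + 1) + (k - m) * a k = (n + m + 1) * (n - m) * c k)
    (hlast : a n = (n + m + 1) * c n) :
    HasDerivAt (jacobiForm n m a) (jacobiForm n (m + 1) c x) x := by
  have hderiv := (hasDerivAt_zpow_mul_shiftedSum (a := a) (N := n)
    (c := fun k => (n + m + 1) * (n - m) * c k) m hx (by exact_mod_cast hlt)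
    (by push_cast; rw [hlast]; ring)).const_mul ((n + m).factorial / (n - m).factorial : ℝ)
  simp only [← mul_assoc] at hderiv
  refine hderiv.congr_deriv ?_
  rw [jacobiForm, factorial_add_div_factorial_sub_succ hmn]
  simp only [shiftedSum, mul_assoc, ← mul_sum]
  push_cast
  ring

lemma jacobiForm_succ_add_sub {n m : ℕ} {x : ℝ} (hmn : m < n) (hx : x ≠ -1) (a b c : ℕ → ℝ)
    (δ : ℝ) :
    jacobiForm n (m + 1) (fun k => b k + δ * c k - a k / ((n + m + 1) * (n - m))) x =
      jacobiForm n (m + 1) b x + δ * jacobiForm n (m + 1) c x - jacobiForm n m a x / (x + 1) := by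
  have hx' : x + 1 ≠ 0 := eq_neg_iff_add_eq_zero.not.mp hx
  have hnm : (n : ℝ) - m ≠ 0 := sub_ne_zero.mpr (by exact_mod_cast hmn.ne')
  have hnm' : (n : ℝ) + m + 1 ≠ 0 := by positivity
  have hsum : shiftedSum (fun k => b k + δ * c k - a k / ((n + m + 1) * (n - m))) (n + 1) x =
      shiftedSum b (n + 1) x + δ * shiftedSum c (n + 1) x
        - shiftedSum a (n + 1) x / ((n + m + 1) * (n - m)) := by
    simp only [shiftedSum, add_mul, sub_mul, sum_add_distrib, sum_sub_distrib, mul_sum, sum_div,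
      mul_assoc, div_mul_eq_mul_div]
  simp only [jacobiForm]
  rw [hsum, factorial_add_div_factorial_sub_succ hmn, Nat.cast_succ,
    zpow_neg_eq_mul_zpow_neg_add_one hx' m]
  field_simp

/-- The coefficients in powers of `(x-1)/2` of the Jacobi polynomial `P_n^{(m,-m)}`, up to the
normalizing factor `(n+m)!/n!`; meaningful for `k ≤ n`. -/
noncomputable def jacobiCoeff (n m k : ℕ) : ℝ :=
  (k + n).factorial / (k.factorial * (k + m).factorial * (n - k).factorial)

lemma jacobiCoeff_succ_index {n k : ℕ} (m : ℕ) (hkn : k < n) :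
    (k + 1) * jacobiCoeff n m (k + 1) =
      jacobiCoeff n m k * ((k + n + 1) * (n - k)) / (k + m + 1) := by
  obtain ⟨d, rfl⟩ := Nat.exists_eq_add_of_lt hkn
  simp only [jacobiCoeff, show k + d + 1 - k = d + 1 by omega,
    show k + d + 1 - (k + 1) = d by omega, add_right_comm k 1, Nat.factorial_succ]
  push_cast
  field_simp
  ring

lemma jacobiCoeff_succ_order (n m k : ℕ) :
    jacobiCoeff n (m + 1) k = jacobiCoeff n m k / (k + m + 1) := by
  simp only [jacobiCoeff, ← add_assoc, Nat.factorial_succ]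
  push_cast
  field_simp

lemma hasDerivAt_jacobiForm_jacobiCoeff {n m : ℕ} {x : ℝ} (hmn : m < n) (hx : x ≠ -1) :
    HasDerivAt (jacobiForm n m (jacobiCoeff n m))
      (jacobiForm n (m + 1) (jacobiCoeff n (m + 1)) x) x := by
  refine hasDerivAt_jacobiForm hmn hx (fun k hkn => ?_) ?_
  · rw [jacobiCoeff_succ_index m hkn, jacobiCoeff_succ_order]
    field_simp
    ring
  · rw [jacobiCoeff_succ_order]
    field_simp

lemma legendreP_eq_jacobiForm (n : ℕ) : legendreP n = jacobiForm n 0 (jacobiCoeff n 0) := by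
  funext x
  have hfact : (n.factorial : ℝ) ≠ 0 := by positivity
  simp [legendreP, jacobiForm, shiftedSum, jacobiCoeff, hfact, add_comm n, sq]

theorem iteratedDeriv_legendreP_s4 {n m : ℕ} {x : ℝ} (hmn : m ≤ n) (hx : x ≠ -1) :
    iteratedDeriv m (legendreP n) x = jacobiForm n m (jacobiCoeff n m) x := by
  induction m generalizing x with
  | zero => rw [iteratedDeriv_zero, legendreP_eq_jacobiForm]
  | succ m ih =>
    have ih_near : iteratedDeriv m (legendreP n) =ᶠ[nhds x] jacobiForm n m (jacobiCoeff n m) :=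
      (eventually_ne_nhds hx).mono fun y hy => ih (by omega) hy
    rw [iteratedDeriv_succ, ih_near.deriv_eq, (hasDerivAt_jacobiForm_jacobiCoeff hmn hx).deriv]

lemma hasDerivAt_iteratedDeriv_legendreP (n m : ℕ) (x : ℝ) :
    HasDerivAt (iteratedDeriv m (legendreP n)) (iteratedDeriv (m + 1) (legendreP n) x) x := by
  have hsmooth : ContDiff ℝ ⊤ (legendreP n) := by
    unfold legendreP
    fun_prop
  rw [iteratedDeriv_succ]
  have hdiff := hsmooth.differentiable_iteratedDeriv m (by exact_mod_cast WithTop.coe_lt_top _)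
  exact (hdiff x).hasDerivAt

lemma psi_succ_succ (j : ℕ) : psi (j + 1 + 1) = psi (j + 1) + 1 / (j + 1) := by
  simp only [psi, harm, Nat.add_sub_cancel, sum_range_succ]
  ring

lemma psi_sub_psi_succ {n m : ℕ} (hmn : m < n) :
    psi (n + (m + 1) + 1) - psi (n - (m + 1) + 1) =
      psi (n + m + 1) - psi (n - m + 1) + (1 / (n + m + 1) + 1 / (n - m)) := by
  obtain ⟨d, rfl⟩ := Nat.exists_eq_add_of_lt hmn
  rw [show m + d + 1 - m = d + 1 by omega, show m + d + 1 - (m + 1) = d by omega, ← add_assoc,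
    psi_succ_succ, psi_succ_succ d]
  push_cast
  ring

/-- The Jacobi coefficients weighted by `2ψ(k+n+1) - ψ(k+m+1)`, as in the last sum of the formula
for the derivatives of `P_n(x) log(x+1)`. -/
noncomputable def digammaJacobiCoeff (n m k : ℕ) : ℝ :=
  jacobiCoeff n m k * (2 * psi (k + n + 1) - psi (k + m + 1))

lemma digammaJacobiCoeff_succ_index (n m k : ℕ) :
    digammaJacobiCoeff n m (k + 1) = jacobiCoeff n m (k + 1) *
      (2 * psi (k + n + 1) - psi (k + m + 1) + 2 / (k + n + 1) - 1 / (k + m + 1)) := by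
  rw [digammaJacobiCoeff, add_right_comm k 1 n, add_right_comm k 1 m, psi_succ_succ, psi_succ_succ]
  push_cast
  ring

lemma digammaJacobiCoeff_succ_order (n m k : ℕ) :
    digammaJacobiCoeff n (m + 1) k =
      jacobiCoeff n (m + 1) k * (2 * psi (k + n + 1) - psi (k + m + 1) - 1 / (k + m + 1)) := by
  rw [digammaJacobiCoeff, ← add_assoc, psi_succ_succ]
  push_cast
  ring

lemma hasDerivAt_jacobiForm_digammaJacobiCoeff {n m : ℕ} {x : ℝ} (hmn : m < n) (hx : x ≠ -1) :
    HasDerivAt (jacobiForm n m (digammaJacobiCoeff n m))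
      (jacobiForm n (m + 1) (digammaJacobiCoeff n (m + 1)) x
        + (1 / (n + m + 1) + 1 / (n - m)) * iteratedDeriv (m + 1) (legendreP n) x
        - iteratedDeriv m (legendreP n) x / (x + 1)) x := by
  have hnm : (n : ℝ) - m ≠ 0 := sub_ne_zero.mpr (by exact_mod_cast hmn.ne')
  rw [iteratedDeriv_legendreP_s4 hmn hx, iteratedDeriv_legendreP_s4 hmn.le hx,
    ← jacobiForm_succ_add_sub hmn hx]
  refine hasDerivAt_jacobiForm hmn hx (fun k hkn => ?_) ?_
  · rw [digammaJacobiCoeff_succ_index, digammaJacobiCoeff_succ_order, ← mul_assoc,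
      jacobiCoeff_succ_index m hkn, jacobiCoeff_succ_order, digammaJacobiCoeff]
    field_simp
    ring
  · rw [digammaJacobiCoeff_succ_order, jacobiCoeff_succ_order, digammaJacobiCoeff]
    field_simp
    ring

/-- The coefficients of `2^m P_n^{(m)}` in powers of `(x-1)/2`, weighted by
`2ψ(k+n+m+1) - ψ(k+m+1)`; meaningful for `k ≤ n - m`. -/
noncomputable def digammaTaylorCoeff (n m k : ℕ) : ℝ :=
  (k + n + m).factorial / (k.factorial * (k + m).factorial * (n - m - k).factorial) *
    (2 * psi (k + n + m + 1) - psi (k + m + 1))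

lemma digammaTaylorCoeff_succ_order (n m k : ℕ) :
    digammaTaylorCoeff n (m + 1) k = (k + 1) * digammaTaylorCoeff n m (k + 1) := by
  simp only [digammaTaylorCoeff, show k + 1 + n + m = k + n + (m + 1) by omega,
    show k + 1 + m = k + (m + 1) by omega, show n - m - (k + 1) = n - (m + 1) - k by omega,
    Nat.factorial_succ k]
  push_cast
  field_simp

lemma digammaTaylorCoeff_zero (n : ℕ) : digammaTaylorCoeff n 0 = digammaJacobiCoeff n 0 := rfl

/-- The term `2^(-m) ∑_{k ≤ n-m} …` of the formula for the derivatives of `P_n(x) log(x+1)`. -/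
noncomputable def digammaTaylorSum (n m : ℕ) (x : ℝ) : ℝ :=
  2 ^ (-(m : ℤ)) * shiftedSum (digammaTaylorCoeff n m) (n - m + 1) x

lemma digammaTaylorSum_zero (n : ℕ) (x : ℝ) :
    digammaTaylorSum n 0 x = jacobiForm n 0 (digammaJacobiCoeff n 0) x := by
  have hfact : (n.factorial : ℝ) ≠ 0 := by positivity
  simp [digammaTaylorSum, jacobiForm, digammaTaylorCoeff_zero, hfact]

lemma hasDerivAt_digammaTaylorSum {n m : ℕ} (hmn : m < n) (x : ℝ) :
    HasDerivAt (digammaTaylorSum n m) (digammaTaylorSum n (m + 1) x) x := by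
  have hzpow : (2 : ℝ) ^ (-((m + 1 : ℕ) : ℤ)) = 2 ^ (-(m : ℤ)) * (1 / 2) := by
    rw [Nat.cast_succ, neg_add, zpow_add₀ two_ne_zero, zpow_neg_one, one_div]
  refine ((hasDerivAt_shiftedSum (digammaTaylorCoeff n m) (n - m) x).const_mul
    ((2 : ℝ) ^ (-(m : ℤ)))).congr_deriv ?_
  rw [digammaTaylorSum, hzpow, show n - (m + 1) + 1 = n - m by omega, mul_assoc,
    funext (digammaTaylorCoeff_succ_order n m)]

/-- For `x < -1` this is the identity for `log |x+1|`, the value of `Real.log (x + 1)` there. -/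
theorem stmt_4_general (m n : ℕ) (hmn : m ≤ n) (x : ℝ) (hx : x ≠ -1) :
    iteratedDeriv m (fun y => legendreP n y * Real.log (y + 1)) x =
      iteratedDeriv m (legendreP n) x * Real.log (x + 1)
      + (psi (n + m + 1) - psi (n - m + 1)) * iteratedDeriv m (legendreP n) x
      - (2 : ℝ) ^ (-(m : ℤ)) *
          ∑ k ∈ Finset.range (n - m + 1),
            ((k + n + m).factorial : ℝ) /
                ((k.factorial : ℝ) * ((k + m).factorial : ℝ) * ((n - m - k).factorial : ℝ)) *
              (2 * psi (k + n + m + 1) - psi (k + m + 1)) * ((x - 1) / 2) ^ k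
      + ((n + m).factorial : ℝ) / ((n - m).factorial : ℝ) * (x + 1) ^ (-(m : ℤ)) *
          ∑ k ∈ Finset.range (n + 1),
            ((k + n).factorial : ℝ) /
                ((k.factorial : ℝ) * ((k + m).factorial : ℝ) * ((n - k).factorial : ℝ)) *
              (2 * psi (k + n + 1) - psi (k + m + 1)) * ((x - 1) / 2) ^ k := by
  change _ = _ - digammaTaylorSum n m x + jacobiForm n m (digammaJacobiCoeff n m) x
  induction m generalizing x with
  | zero => simp [digammaTaylorSum_zero]
  | succ m ih =>
    have hx' : x + 1 ≠ 0 := eq_neg_iff_add_eq_zero.not.mp hx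
    have ih_near := (eventually_ne_nhds hx).mono fun y hy => ih (by omega) y hy
    have hP := hasDerivAt_iteratedDeriv_legendreP n m x
    have hlog : HasDerivAt (fun y => Real.log (y + 1)) (1 / (x + 1)) x :=
      ((hasDerivAt_id x).add_const 1).log hx'
    have hderiv := (((hP.fun_mul hlog).fun_add
      (hP.const_mul (psi (n + m + 1) - psi (n - m + 1)))).fun_sub
      (hasDerivAt_digammaTaylorSum hmn x)).fun_add
      (hasDerivAt_jacobiForm_digammaJacobiCoeff hmn hx)
    rw [iteratedDeriv_succ, Filter.EventuallyEq.deriv_eq ih_near, hderiv.deriv,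
      psi_sub_psi_succ hmn]
    ring

theorem stmt_4 (m n : ℕ) (hmn : m ≤ n) (x : ℝ) (hx : 1 < x) :
    iteratedDeriv m (fun y => legendreP n y * Real.log (y + 1)) x =
      iteratedDeriv m (legendreP n) x * Real.log (x + 1)
      + (psi (n + m + 1) - psi (n - m + 1)) * iteratedDeriv m (legendreP n) x
      - (2 : ℝ) ^ (-(m : ℤ)) *
          ∑ k ∈ Finset.range (n - m + 1),
            ((k + n + m).factorial : ℝ) /
                ((k.factorial : ℝ) * ((k + m).factorial : ℝ) * ((n - m - k).factorial : ℝ)) *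
              (2 * psi (k + n + m + 1) - psi (k + m + 1)) * ((x - 1) / 2) ^ k
      + ((n + m).factorial : ℝ) / ((n - m).factorial : ℝ) * (x + 1) ^ (-(m : ℤ)) *
          ∑ k ∈ Finset.range (n + 1),
            ((k + n).factorial : ℝ) /
                ((k.factorial : ℝ) * ((k + m).factorial : ℝ) * ((n - k).factorial : ℝ)) *
              (2 * psi (k + n + 1) - psi (k + m + 1)) * ((x - 1) / 2) ^ k :=
  stmt_4_general m n hmn x (by linarith)
end
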